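/- (Corollary 4: distillation bound under positive maps) Let ρ be a state on H_A and φ a pure state on H_B, and define p_μ(X) := inf{‖Z‖_μ : Z ∈ T_sa, X ≤ Z}. Suppose the resource norms are submultiplicative under tensor products, ‖X ⊗ Y‖_μ ≤ ‖X‖_μ · ‖Y‖_μ, and suppose D > 0 is achievable via positive maps: there exist linear maps Γ_n : T_sa(H_A^{⊗n}) → T_sa(H_B^{⊗⌊Dn⌋}) that map positive semidefinite operators to positive semidefinite operators and contract both the trace norm and the resource norms, with (1/2)‖Γ_n(ρ^{⊗n}) − φ^{⊗⌊Dn⌋}‖₁ → 0. Then D · (− limsup_{m→∞} (1/m) log₂ ‖φ^{⊗m}‖_μ°) ≤ log₂ p_μ(ρ). -/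

import Mathlib

/-!
The bound is a weak-converse argument with `φ^{⊗m}`, `m = ⌊Dn⌋`, as witness. For any `Z ≥ ρ` one
has `Z^{⊗n} ≥ ρ^{⊗n}` (`tpow_mono`), and positivity of `Γ_n` gives
`⟨φ^{⊗m}, Γ_n(Z^{⊗n})⟩ ≥ ⟨φ^{⊗m}, Γ_n(ρ^{⊗n})⟩`. Since `φ^{⊗m}` is an orthogonal projection of trace
one, the right-hand side is at least `1 - ‖Γ_n(ρ^{⊗n}) - φ^{⊗m}‖₁` (`abs_hip_le_trNorm`), hence
eventually at least `1/2`. The left-hand side is at most `‖φ^{⊗m}‖° · ‖Γ_n(Z^{⊗n})‖`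
(`hip_le_dual_mul`), hence at most `‖φ^{⊗m}‖° · ‖Z‖ⁿ` by contractivity and submultiplicativity. So
eventually `1/2 ≤ ‖φ^{⊗⌊Dn⌋}‖° · ‖Z‖ⁿ`.

Taking logarithms, dividing by `n` and using `⌊Dn⌋ / n → D` gives `D · L ≤ log₂ ‖Z‖` for every real
`L < - limsup (1/m) log₂ ‖φ^{⊗m}‖°` (`rate_le_logb`). The infimum over `Z` then gives the claim.

The dual norm is defined by a real supremum, so Hölder's inequality for it needs the supremum to be
bounded; this is the equivalence of norms in finite dimension (`exists_bound_of_norm`).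
-/

open scoped ComplexOrder
open Filter

noncomputable section

/-- The real vector space of self-adjoint (Hermitian) operators on `ℂ^ι`. -/
abbrev HMat (ι : Type) [Fintype ι] [DecidableEq ι] : Type :=
  selfAdjoint (Matrix ι ι ℂ)

variable {ι κ : Type} [Fintype ι] [DecidableEq ι] [Fintype κ] [DecidableEq κ]

/-- The matrix underlying a self-adjoint operator is Hermitian. -/
def herm (X : HMat ι) : X.1.IsHermitian := X.2

/-- The (real) Hilbert–Schmidt inner product `⟨Q, X⟩ = Tr (Q X)`. -/
def hip (Q X : HMat ι) : ℝ := (Matrix.trace (Q.1 * X.1)).re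

/-- The trace norm of a self-adjoint operator: the sum of absolute values of eigenvalues. -/
def trNorm (X : HMat ι) : ℝ := ∑ i, |(herm X).eigenvalues i|

/-- The operator norm of a self-adjoint operator: the largest absolute value of an eigenvalue. -/
def opNorm (X : HMat ι) : ℝ := ⨆ i, |(herm X).eigenvalues i|

/-- A state: a positive semidefinite operator of unit trace. -/
def IsState (ρ : HMat ι) : Prop := ρ.1.PosSemidef ∧ Matrix.trace ρ.1 = 1

/-- A pure state: a rank-one orthogonal projection. -/
def IsPureState (φ : HMat ι) : Prop := IsState φ ∧ φ.1 * φ.1 = φ.1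

/-- A norm-like function on self-adjoint operators. -/
structure MatNorm (ι : Type) [Fintype ι] [DecidableEq ι] where
  toFun : HMat ι → ℝ
  eq_zero' : ∀ X, toFun X = 0 → X = 0
  smul' : ∀ (t : ℝ) (X), toFun (t • X) = |t| * toFun X
  add_le' : ∀ X Y, toFun (X + Y) ≤ toFun X + toFun Y

/-- A resource norm: a norm with `‖ρ‖ ≥ 1` on every state. -/
structure ResourceNorm (ι : Type) [Fintype ι] [DecidableEq ι] extends MatNorm ι where
  one_le_state' : ∀ ρ, IsState ρ → 1 ≤ toFun ρ

/-- The dual norm `‖Q‖° = sup {⟨Q, X⟩ : ‖X‖ ≤ 1}`. -/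
def dualNormF (ν : HMat ι → ℝ) (Q : HMat ι) : ℝ :=
  sSup {r | ∃ X, ν X ≤ 1 ∧ r = hip Q X}

/-- Membership in the class `O_μ` of maps contracting the trace norm and the resource norms. -/
def MemO (νi : ResourceNorm ι) (νo : ResourceNorm κ) (Λ : HMat ι →ₗ[ℝ] HMat κ) : Prop :=
  (∀ X, trNorm (Λ X) ≤ trNorm X) ∧ (∀ X, νo.toFun (Λ X) ≤ νi.toFun X)

/-- The trace-norm ε-ball around a state. -/
def ball (ρ : HMat ι) (ε : ℝ) : Set (HMat ι) :=
  {X | trNorm X ≤ 1 ∧ trNorm (X - ρ) ≤ ε}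

/-- Loewner order: `A ≤ B` iff `B - A` is positive semidefinite. -/
def loew (A B : Matrix ι ι ℂ) : Prop := (B - A).PosSemidef

/-- The feasible values `⟨Q, Z⟩` entering the emancipated hypothesis testing quantity. -/
def dhSet (ρ Z : HMat ι) (ε : ℝ) : Set ℝ :=
  {r | ∃ Q : HMat ι, loew (-(1 : Matrix ι ι ℂ)) Q.1 ∧ loew Q.1 1 ∧
        1 - ε ≤ hip Q ρ ∧ r = hip Q Z}

/-- The non-logarithmic emancipated hypothesis testing quantity `d_ħ^ε(ρ‖Z)`,
with value `+∞` when the infimum is `≤ 0`. -/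
def dEmanc (ρ Z : HMat ι) (ε : ℝ) : EReal :=
  if 0 < sInf (dhSet ρ Z ε) then (((sInf (dhSet ρ Z ε))⁻¹ : ℝ) : EReal) else ⊤

/-- The emancipated hypothesis testing relative entropy `D_ħ^ε(ρ‖Z)` (base-2 logarithmic form),
with value `+∞` when the infimum is `≤ 0`. -/
def DEmanc (ρ Z : HMat ι) (ε : ℝ) : EReal :=
  if 0 < sInf (dhSet ρ Z ε) then ((-Real.logb 2 (sInf (dhSet ρ Z ε)) : ℝ) : EReal) else ⊤


/-- The `n`-fold tensor (Kronecker) power of a self-adjoint operator. -/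
def tpow {d : ℕ} (A : HMat (Fin d)) (n : ℕ) : HMat (Fin n → Fin d) :=
  ⟨Matrix.of fun i j => ∏ k, A.1 (i k) (j k), by
    refine Matrix.IsHermitian.isSelfAdjoint ?_
    refine Matrix.IsHermitian.ext fun i j => ?_
    simp only [Matrix.of_apply]
    rw [star_prod]
    exact Finset.prod_congr rfl fun k _ => (herm A).apply (i k) (j k)⟩

/-- Combining operators on `m` and `n` copies into one on `m + n` copies (tensor product). -/
def kron {d m n : ℕ} (Y : HMat (Fin m → Fin d)) (Z : HMat (Fin n → Fin d)) :
    HMat (Fin (m + n) → Fin d) :=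
  ⟨Matrix.of fun i j =>
      Y.1 (fun k => i (Fin.castAdd n k)) (fun k => j (Fin.castAdd n k)) *
        Z.1 (fun k => i (Fin.natAdd m k)) (fun k => j (Fin.natAdd m k)), by
    refine Matrix.IsHermitian.isSelfAdjoint ?_
    refine Matrix.IsHermitian.ext fun i j => ?_
    simp only [Matrix.of_apply, star_mul']
    rw [(herm Y).apply, (herm Z).apply]⟩

/-- The positive variant `p_μ(X) = inf {‖Z‖_μ : X ≤ Z}` of the single-copy resource norm. -/
def pmuOne {dA : ℕ} (νA : (n : ℕ) → ResourceNorm (Fin n → Fin dA))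
    (X : HMat (Fin dA)) : ℝ :=
  sInf {r | ∃ Z : HMat (Fin dA), (Z.1 - X.1).PosSemidef ∧ r = (νA 1).toFun (tpow Z 1)}

/-! ### Norm duality -/

/-- A linear functional on a finite-dimensional real space is bounded with respect to any function
satisfying the axioms of a norm. -/
lemma exists_bound_of_norm {V : Type*} [AddCommGroup V] [Module ℝ V] [FiniteDimensional ℝ V]
    (N : V → ℝ) (h0 : ∀ x, N x = 0 → x = 0) (hs : ∀ (t : ℝ) x, N (t • x) = |t| * N x)
    (ha : ∀ x y, N (x + y) ≤ N x + N y) (f : V →ₗ[ℝ] ℝ) :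
    ∃ C, 0 ≤ C ∧ ∀ x, f x ≤ C * N x := by
  have hN0 : N 0 = 0 := by simpa using hs 0 0
  have hneg : ∀ x, N (-x) = N x := fun x => by simpa using hs (-1) x
  let p : AddGroupNorm V :=
    { toFun := N, map_zero' := hN0, add_le' := ha, neg' := hneg,
      eq_zero_of_map_eq_zero' := h0 }
  let : NormedAddCommGroup V := p.toNormedAddCommGroup
  let : NormedSpace ℝ V := ⟨fun t x => (hs t x).le⟩
  let g : V →L[ℝ] ℝ := LinearMap.toContinuousLinearMap f
  exact ⟨‖g‖, norm_nonneg _, fun x => (le_abs_self _).trans (g.le_opNorm x)⟩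

lemma MatNorm.nonneg (ν : MatNorm ι) (X : HMat ι) : 0 ≤ ν.toFun X := by
  have h0 : ν.toFun 0 = 0 := by simpa using ν.smul' 0 0
  have hneg : ν.toFun (-X) = ν.toFun X := by simpa using ν.smul' (-1) X
  have := ν.add_le' X (-X)
  rw [add_neg_cancel, h0, hneg] at this
  linarith

lemma hip_add (Q X Y : HMat ι) : hip Q (X + Y) = hip Q X + hip Q Y := by
  simp [hip, mul_add]

lemma hip_sub (Q X Y : HMat ι) : hip Q (X - Y) = hip Q X - hip Q Y := by
  simp [hip, mul_sub]

lemma hip_smul (Q : HMat ι) (t : ℝ) (X : HMat ι) : hip Q (t • X) = t * hip Q X := by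
  simp [hip]

lemma bddAbove_dual (ν : MatNorm ι) (Q : HMat ι) :
    BddAbove {r | ∃ X, ν.toFun X ≤ 1 ∧ r = hip Q X} := by
  let f : HMat ι →ₗ[ℝ] ℝ :=
    { toFun := hip Q, map_add' := hip_add Q, map_smul' := fun t X => hip_smul Q t X }
  have : FiniteDimensional ℝ (HMat ι) :=
    inferInstanceAs (FiniteDimensional ℝ (selfAdjoint.submodule ℝ (Matrix ι ι ℂ)))
  obtain ⟨C, hC, h⟩ := exists_bound_of_norm ν.toFun ν.eq_zero' ν.smul' ν.add_le' f
  refine ⟨C, ?_⟩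
  rintro r ⟨X, hX, rfl⟩
  exact (h X).trans (mul_le_of_le_one_right hC hX)

lemma dual_nonneg (ν : MatNorm ι) (Q : HMat ι) : 0 ≤ dualNormF ν.toFun Q := by
  refine le_csSup (bddAbove_dual ν Q) ⟨0, ?_, by simp [hip]⟩
  have h0 : ν.toFun 0 = 0 := by simpa using ν.smul' 0 0
  simp [h0]

lemma hip_le_dual_mul (ν : MatNorm ι) (Q X : HMat ι) :
    hip Q X ≤ dualNormF ν.toFun Q * ν.toFun X := by
  rcases (ν.nonneg X).eq_or_lt with h | h
  · rw [ν.eq_zero' X h.symm]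
    have h0 : ν.toFun 0 = 0 := by simpa using ν.smul' 0 0
    simp [hip, h0]
  · rw [← div_le_iff₀ h]
    refine le_csSup (bddAbove_dual ν Q) ⟨(ν.toFun X)⁻¹ • X, ?_, ?_⟩
    · rw [ν.smul', abs_of_pos (inv_pos.2 h), inv_mul_cancel₀ h.ne']
    · rw [hip_smul, div_eq_inv_mul]

/-- Hölder's inequality against the trace norm, for test operators `0 ≤ Q ≤ 1`. -/
lemma abs_hip_le_trNorm (Q X : HMat ι) (hQ : Q.1.PosSemidef) (hQ1 : (1 - Q.1).PosSemidef) :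
    |hip Q X| ≤ trNorm X := by
  set U : Matrix ι ι ℂ := ((herm X).eigenvectorUnitary : Matrix ι ι ℂ) with hU
  have hUU : star U * U = 1 := Unitary.coe_star_mul_self _
  set P : Matrix ι ι ℂ := star U * Q.1 * U with hP
  have hP0 : P.PosSemidef := by
    simpa [hP, Matrix.star_eq_conjTranspose] using hQ.conjTranspose_mul_mul_same U
  have hP1 : (1 - P).PosSemidef := by
    have := hQ1.conjTranspose_mul_mul_same U
    rwa [mul_sub, sub_mul, mul_one, ← Matrix.star_eq_conjTranspose, hUU] at this
  -- In an eigenbasis of `X`, the inner product is the sum of its eigenvalues weighted by `P i i`.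
  have key : hip Q X = ∑ i, (P i i).re * (herm X).eigenvalues i := by
    have hX : X.1 = U * Matrix.diagonal (RCLike.ofReal ∘ (herm X).eigenvalues) * star U := by
      conv_lhs => rw [(herm X).spectral_theorem, Unitary.conjStarAlgAut_apply]
    unfold hip
    rw [congrArg (fun M => Q.1 * M) hX, ← mul_assoc, Matrix.trace_mul_comm, ← mul_assoc,
      ← mul_assoc, ← hP]
    simp [Matrix.trace, Matrix.mul_diagonal, Complex.mul_re]
  rw [key, trNorm]
  refine (Finset.abs_sum_le_sum_abs _ _).trans (Finset.sum_le_sum fun i _ => ?_)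
  have h0 : 0 ≤ (P i i).re := (Complex.le_def.1 (hP0.diag_nonneg (i := i))).1
  have h1 : (P i i).re ≤ 1 := by
    have := (Complex.le_def.1 (hP1.diag_nonneg (i := i))).1
    simp at this
    linarith
  rw [abs_mul, abs_of_nonneg h0]
  exact mul_le_of_le_one_left (abs_nonneg _) h1

/-- A projection has nonnegative inner product with a positive semidefinite operator, as
`Tr (Q X) = Tr (Q X Q)`. -/
lemma hip_nonneg {Q X : HMat ι} (hQ : Q.1 * Q.1 = Q.1) (hX : X.1.PosSemidef) :
    0 ≤ hip Q X := by
  have h : (Q.1 * X.1).trace = (Q.1.conjTranspose * X.1 * Q.1).trace := by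
    rw [(herm Q).eq, Matrix.trace_mul_comm (Q.1 * X.1), ← mul_assoc, hQ]
  rw [hip, h]
  exact (Complex.le_def.1 (hX.conjTranspose_mul_mul_same Q.1).trace_nonneg).1

/-! ### Tensor powers -/

lemma kron_posSemidef {d m n : ℕ} {Y : HMat (Fin m → Fin d)} {Z : HMat (Fin n → Fin d)}
    (hY : Y.1.PosSemidef) (hZ : Z.1.PosSemidef) : (kron Y Z).1.PosSemidef :=
  (hY.kronecker hZ).submatrix fun i : Fin (m + n) → Fin d =>
    ((fun k => i (Fin.castAdd n k)), (fun k => i (Fin.natAdd m k)))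

lemma tpow_succ {d : ℕ} (A : HMat (Fin d)) (n : ℕ) :
    tpow A (n + 1) = kron (tpow A n) (tpow A 1) := by
  ext i j
  simp only [tpow, kron, Matrix.of_apply]
  rw [Fin.prod_univ_add]

lemma tpow_one_posSemidef {d : ℕ} {A : HMat (Fin d)} (hA : A.1.PosSemidef) :
    (tpow A 1).1.PosSemidef := by
  have : (tpow A 1).1 = A.1.submatrix (fun i : Fin 1 → Fin d => i 0) (fun i => i 0) := by
    ext i j
    simp [tpow]
  rw [this]
  exact hA.submatrix _

lemma tpow_posSemidef {d : ℕ} {A : HMat (Fin d)} (hA : A.1.PosSemidef) (n : ℕ) :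
    (tpow A n).1.PosSemidef := by
  induction n with
  | zero =>
    have : (tpow A 0).1 = 1 := by
      ext i j
      obtain rfl := Subsingleton.elim i j
      simp [tpow]
    rw [this]
    exact Matrix.PosSemidef.one
  | succ n ih =>
    rw [tpow_succ]
    exact kron_posSemidef ih (tpow_one_posSemidef hA)

/-- Tensor powers are monotone on positive semidefinite operators, by the telescoping
`Z^{⊗(n+1)} - ρ^{⊗(n+1)} = Z^{⊗n} ⊗ (Z - ρ) + (Z^{⊗n} - ρ^{⊗n}) ⊗ ρ`. -/
lemma tpow_mono {d : ℕ} {ρ Z : HMat (Fin d)} (hρ : ρ.1.PosSemidef)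
    (h : (Z.1 - ρ.1).PosSemidef) (n : ℕ) : ((tpow Z n) - (tpow ρ n)).1.PosSemidef := by
  have hZ : Z.1.PosSemidef := by simpa using h.add hρ
  induction n with
  | zero =>
    have : tpow Z 0 - tpow ρ 0 = 0 := by
      ext i j
      simp [tpow]
    rw [this]
    exact Matrix.PosSemidef.zero
  | succ n ih =>
    have : tpow Z (n + 1) - tpow ρ (n + 1) =
        kron (tpow Z n) (tpow (Z - ρ) 1) + kron (tpow Z n - tpow ρ n) (tpow ρ 1) := by
      ext i j
      simp only [tpow_succ _ n]
      simp [kron, tpow]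
      ring
    rw [this]
    exact (kron_posSemidef (tpow_posSemidef hZ n) (tpow_one_posSemidef (A := Z - ρ) h)).add
      (kron_posSemidef ih (tpow_one_posSemidef hρ))

lemma tpow_mul_self {d : ℕ} {A : HMat (Fin d)} (hA : A.1 * A.1 = A.1) (n : ℕ) :
    (tpow A n).1 * (tpow A n).1 = (tpow A n).1 := by
  ext i j
  simp only [tpow, Matrix.mul_apply, Matrix.of_apply, ← Finset.prod_mul_distrib]
  rw [← Fintype.prod_sum fun (k : Fin n) (l : Fin d) => A.1 (i k) l * A.1 l (j k)]
  refine Finset.prod_congr rfl fun k _ => ?_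
  rw [← Matrix.mul_apply, hA]

lemma tpow_trace {d : ℕ} (A : HMat (Fin d)) (n : ℕ) :
    (tpow A n).1.trace = A.1.trace ^ n := by
  simp only [tpow, Matrix.trace, Matrix.diag_apply, Matrix.of_apply]
  rw [← Fintype.prod_sum fun (_ : Fin n) (l : Fin d) => A.1 l l]
  simp

lemma norm_tpow_le {d : ℕ} (νA : (n : ℕ) → ResourceNorm (Fin n → Fin d))
    (hsubmul : ∀ (m n : ℕ) (X : HMat (Fin m → Fin d)) (Y : HMat (Fin n → Fin d)),
      (νA (m + n)).toFun (kron X Y) ≤ (νA m).toFun X * (νA n).toFun Y)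
    (Z : HMat (Fin d)) {n : ℕ} (hn : 1 ≤ n) :
    (νA n).toFun (tpow Z n) ≤ (νA 1).toFun (tpow Z 1) ^ n := by
  induction n, hn using Nat.le_induction with
  | base => simp
  | succ n _ ih =>
    rw [tpow_succ, pow_succ]
    exact (hsubmul n 1 _ _).trans
      (mul_le_mul_of_nonneg_right ih ((νA 1).toMatNorm.nonneg _))

/-! ### The asymptotic bound -/

/-- One-shot bound: for a positive map `Γ` contracting the norms, a rank-one projection `Q` and
`R ≤ W`, the error of `Γ R` as an approximation of `Q` satisfies `1 - ‖Γ R - Q‖₁ ≤ ‖Q‖° ‖W‖`. -/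
lemma one_shot (νi : MatNorm ι) (νo : MatNorm κ) (Γ : HMat ι →ₗ[ℝ] HMat κ)
    (hpos : ∀ X : HMat ι, X.1.PosSemidef → (Γ X).1.PosSemidef)
    (hμ : ∀ X, νo.toFun (Γ X) ≤ νi.toFun X)
    (Q : HMat κ) (hQ : Q.1 * Q.1 = Q.1) (hQtr : Q.1.trace = 1)
    (R W : HMat ι) (hRW : (W - R).1.PosSemidef) :
    1 - trNorm (Γ R - Q) ≤ dualNormF νo.toFun Q * νi.toFun W := by
  have hQpos : Q.1.PosSemidef := by
    have := Matrix.posSemidef_conjTranspose_mul_self Q.1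
    rwa [(herm Q).eq, hQ] at this
  have hQone : (1 - Q.1).PosSemidef := by
    have := Matrix.posSemidef_conjTranspose_mul_self (1 - Q.1)
    rwa [Matrix.conjTranspose_sub, (herm Q).eq, Matrix.conjTranspose_one, mul_sub, sub_mul,
      sub_mul, hQ, mul_one, one_mul, mul_one, sub_self, sub_zero] at this
  have h1 : hip Q Q = 1 := by simp [hip, hQ, hQtr]
  have h2 := hip_nonneg hQ (hpos _ hRW)
  rw [map_sub, hip_sub] at h2
  have h3 := (abs_le.1 (abs_hip_le_trNorm Q (Γ R - Q) hQpos hQone)).1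
  rw [hip_sub, h1] at h3
  have h4 := hip_le_dual_mul νo Q (Γ W)
  have h5 := mul_le_mul_of_nonneg_left (hμ W) (dual_nonneg νo Q)
  linarith

/-- If `δ m` eventually decays at exponential rate at least `L`, then `1/2 ≤ δ ⌊Dn⌋ * z ^ n`
eventually forces `z` to grow at rate at least `D * L`. -/
lemma rate_le_logb {D L z : ℝ} (hD : 0 < D) (hz : 0 ≤ z) (δ : ℕ → ℝ) (hδ : ∀ m, 0 ≤ δ m)
    (hL : ∀ᶠ m : ℕ in atTop, (m : ℝ)⁻¹ * Real.logb 2 (δ m) < -L)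
    (h : ∀ᶠ n : ℕ in atTop, 1 / 2 ≤ δ ⌊D * (n : ℝ)⌋₊ * z ^ n) :
    0 < z ∧ D * L ≤ Real.logb 2 z := by
  have hfl : Tendsto (fun n : ℕ => ⌊D * (n : ℝ)⌋₊) atTop atTop :=
    (tendsto_nat_floor_mul_atTop D hD).comp tendsto_natCast_atTop_atTop
  have hratio : Tendsto (fun n : ℕ => (⌊D * (n : ℝ)⌋₊ : ℝ) / (n : ℝ)) atTop (nhds D) :=
    (tendsto_nat_floor_mul_div_atTop hD.le).comp tendsto_natCast_atTop_atTop
  have hzpos : 0 < z := by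
    obtain ⟨n, hn, hn0⟩ := (h.and (eventually_gt_atTop 0)).exists
    refine hz.lt_of_ne fun h0 => ?_
    rw [← h0, zero_pow hn0.ne', mul_zero] at hn
    norm_num at hn
  refine ⟨hzpos, ?_⟩
  have hlim : Tendsto (fun n : ℕ => (⌊D * (n : ℝ)⌋₊ : ℝ) / (n : ℝ) * L - (n : ℝ)⁻¹) atTop
      (nhds (D * L)) := by
    simpa using (hratio.mul_const L).sub tendsto_inv_atTop_nhds_zero_nat
  refine le_of_tendsto hlim ?_
  filter_upwards [h, hfl.eventually hL, hfl.eventually (eventually_gt_atTop 0),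
    eventually_gt_atTop 0] with n hn hLn hm hn0
  have hm' : (0 : ℝ) < (⌊D * (n : ℝ)⌋₊ : ℝ) := Nat.cast_pos.2 hm
  have hn' : (0 : ℝ) < n := Nat.cast_pos.2 hn0
  have hδpos : 0 < δ ⌊D * (n : ℝ)⌋₊ := by
    refine (hδ _).lt_of_ne fun h0 => ?_
    rw [← h0, zero_mul] at hn
    norm_num at hn
  have hlog := Real.logb_le_logb_of_le (b := 2) (by norm_num) (by norm_num) hn
  have hhalf : Real.logb 2 (1 / 2) = -1 := by
    rw [one_div, Real.logb_inv, Real.logb_self_eq_one (by norm_num)]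
  rw [hhalf, Real.logb_mul hδpos.ne' (pow_pos hzpos n).ne', Real.logb_pow] at hlog
  rw [inv_mul_lt_iff₀ hm'] at hLn
  have hsum : (⌊D * (n : ℝ)⌋₊ : ℝ) / (n : ℝ) * L - (n : ℝ)⁻¹
      = ((⌊D * (n : ℝ)⌋₊ : ℝ) * L - 1) / n := by
    field_simp
  rw [hsum, div_le_iff₀ hn']
  linarith

/-- **Corollary 4 (distillation bound under positive maps).**
If the resource norms are submultiplicative under tensor products and `D > 0` is achievable
via positive trace-norm- and resource-norm-contracting maps, then
`D · (− limsup (1/m) log₂ ‖φ^{⊗m}‖_μ°) ≤ log₂ p_μ(ρ)`. -/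
theorem distillation_bound_positive_maps
    {dA dB : ℕ}
    (νA : (n : ℕ) → ResourceNorm (Fin n → Fin dA))
    (νB : (n : ℕ) → ResourceNorm (Fin n → Fin dB))
    (hsubmul : ∀ (m n : ℕ) (X : HMat (Fin m → Fin dA)) (Y : HMat (Fin n → Fin dA)),
      (νA (m + n)).toFun (kron X Y) ≤ (νA m).toFun X * (νA n).toFun Y)
    (ρ : HMat (Fin dA)) (hρ : IsState ρ)
    (φ : HMat (Fin dB)) (hφ : IsPureState φ)
    (D : ℝ) (hD : 0 < D)
    (Γ : (n : ℕ) → (HMat (Fin n → Fin dA) →ₗ[ℝ] HMat (Fin ⌊D * (n : ℝ)⌋₊ → Fin dB)))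
    (hΓpos : ∀ (n : ℕ) (X : HMat (Fin n → Fin dA)), X.1.PosSemidef → ((Γ n) X).1.PosSemidef)
    (hΓtr : ∀ n X, trNorm ((Γ n) X) ≤ trNorm X)
    (hΓμ : ∀ (n : ℕ) X, (νB ⌊D * (n : ℝ)⌋₊).toFun ((Γ n) X) ≤ (νA n).toFun X)
    (hconv : Tendsto
      (fun n : ℕ => (1 / 2) * trNorm ((Γ n) (tpow ρ n) - tpow φ ⌊D * (n : ℝ)⌋₊))
      atTop (nhds 0)) :
    ((D : ℝ) : EReal) *
        (- Filter.limsup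
          (fun m : ℕ =>
            (((m : ℝ)⁻¹ * Real.logb 2 (dualNormF (νB m).toFun (tpow φ m)) : ℝ) : EReal))
          atTop) ≤
      ((Real.logb 2 (pmuOne νA ρ) : ℝ) : EReal) := by
  -- It suffices to treat every real rate `L` strictly below `- limsup`.
  have hDE : ((D : ℝ) : EReal) > 0 := EReal.coe_pos.2 hD
  rw [mul_comm, ← EReal.le_div_iff_mul_le hDE (EReal.coe_ne_top D), ← EReal.coe_div,
    ← EReal.ge_of_forall_gt_iff_ge]
  intro L hL
  rw [EReal.coe_le_coe_iff, le_div_iff₀ hD, mul_comm]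
  have hLev : ∀ᶠ m : ℕ in atTop,
      (m : ℝ)⁻¹ * Real.logb 2 (dualNormF (νB m).toFun (tpow φ m)) < -L := by
    filter_upwards [eventually_lt_of_limsup_lt (EReal.lt_neg_comm.1 hL)] with m hm
    exact_mod_cast hm
  have hsmall : ∀ᶠ n : ℕ in atTop,
      (1 / 2) * trNorm ((Γ n) (tpow ρ n) - tpow φ ⌊D * (n : ℝ)⌋₊) < 1 / 4 :=
    hconv.eventually_lt_const (by norm_num)
  have hZ : ∀ Z : HMat (Fin dA), (Z.1 - ρ.1).PosSemidef →
      0 < (νA 1).toFun (tpow Z 1) ∧ D * L ≤ Real.logb 2 ((νA 1).toFun (tpow Z 1)) := by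
    intro Z hZρ
    refine rate_le_logb hD ((νA 1).toMatNorm.nonneg _)
      (fun m => dualNormF (νB m).toFun (tpow φ m))
      (fun m => dual_nonneg (νB m).toMatNorm _) hLev ?_
    filter_upwards [hsmall, eventually_ge_atTop 1] with n hn hn1
    have h1 := one_shot (νA n).toMatNorm (νB ⌊D * (n : ℝ)⌋₊).toMatNorm (Γ n) (hΓpos n) (hΓμ n)
      (tpow φ _) (tpow_mul_self hφ.2 _) (by rw [tpow_trace, hφ.1.2, one_pow])
      (tpow ρ n) (tpow Z n) (tpow_mono hρ.1 hZρ n)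
    have h2 := mul_le_mul_of_nonneg_left (norm_tpow_le νA hsubmul Z hn1)
      (dual_nonneg (νB ⌊D * (n : ℝ)⌋₊).toMatNorm (tpow φ _))
    linarith
  have hp : (2 : ℝ) ^ (D * L) ≤ pmuOne νA ρ := by
    refine le_csInf ⟨_, ρ, by simpa using Matrix.PosSemidef.zero, rfl⟩ ?_
    rintro r ⟨Z, hZρ, rfl⟩
    obtain ⟨hpos, hle⟩ := hZ Z hZρ
    exact (Real.le_logb_iff_rpow_le (by norm_num) hpos).1 hle
  exact (Real.le_logb_iff_rpow_le (by norm_num)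
    ((Real.rpow_pos_of_pos (by norm_num) _).trans_le hp)).2 hp

end
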